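/- arXiv:2409.02506 — 5 statements merged into one kernel-verified Lean document; each statement's English description precedes it below -/
import Mathlib

section
/- For every unitary 2×2 complex matrix U there exist real numbers α, β, γ, δ such that U = e^{iα}·Rz(β)·Ry(γ)·Rz(δ), i.e. U equals the matrix [[e^{i(α−β/2−δ/2)}cos(γ/2), −e^{i(α−β/2+δ/2)}sin(γ/2)],[e^{i(α+β/2−δ/2)}sin(γ/2), e^{i(α+β/2+δ/2)}cos(γ/2)]]. -/
open Matrix Complex

noncomputable section

/-- Rz(θ) := diag(e^{-iθ/2}, e^{iθ/2}) -/
def Rz (θ : ℝ) : Matrix (Fin 2) (Fin 2) ℂ :=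
  !![Complex.exp (-((θ : ℂ)/2) * Complex.I), 0; 0, Complex.exp (((θ : ℂ)/2) * Complex.I)]

/-- Ry(θ) := [[cos(θ/2), -sin(θ/2)],[sin(θ/2), cos(θ/2)]] -/
def Ry (θ : ℝ) : Matrix (Fin 2) (Fin 2) ℂ :=
  !![(Real.cos (θ/2) : ℂ), -(Real.sin (θ/2) : ℂ);
     (Real.sin (θ/2) : ℂ),  (Real.cos (θ/2) : ℂ)]

/-- A matrix is unitary if U·Uᴴ = Uᴴ·U = I. -/
def IsUnitary (U : Matrix (Fin 2) (Fin 2) ℂ) : Prop := U * Uᴴ = 1 ∧ Uᴴ * U = 1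

theorem zyz_decomposition (U : Matrix (Fin 2) (Fin 2) ℂ) (hU : IsUnitary U) :
    ∃ α β γ δ : ℝ,
      U = Complex.exp ((α : ℂ) * Complex.I) • (Rz β * Ry γ * Rz δ) ∧
      U = !![Complex.exp (((α - β/2 - δ/2 : ℝ) : ℂ) * Complex.I) * (Real.cos (γ/2) : ℂ),
             -(Complex.exp (((α - β/2 + δ/2 : ℝ) : ℂ) * Complex.I) * (Real.sin (γ/2) : ℂ));
             Complex.exp (((α + β/2 - δ/2 : ℝ) : ℂ) * Complex.I) * (Real.sin (γ/2) : ℂ),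
             Complex.exp (((α + β/2 + δ/2 : ℝ) : ℂ) * Complex.I) * (Real.cos (γ/2) : ℂ)] := by
  obtain ⟨h1, h2⟩ := hU
  have e00 := congrFun (congrFun h2 0) 0
  have e01 := congrFun (congrFun h2 0) 1
  have e10 := congrFun (congrFun h2 1) 0
  have e11 := congrFun (congrFun h2 1) 1
  simp [Matrix.mul_apply, Fin.sum_univ_two] at e00 e01 e10 e11
  obtain ⟨a, ha⟩ : ∃ a, a = U 0 0 := ⟨_, rfl⟩
  obtain ⟨b, hb⟩ : ∃ b, b = U 0 1 := ⟨_, rfl⟩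
  obtain ⟨c, hc⟩ : ∃ c, c = U 1 0 := ⟨_, rfl⟩
  obtain ⟨d, hd⟩ : ∃ d, d = U 1 1 := ⟨_, rfl⟩
  have hUe : U = !![a, b; c, d] := by
    ext i j; fin_cases i <;> fin_cases j <;> simp [ha, hb, hc, hd]
  rw [← ha, ← hc] at e00
  rw [← ha, ← hb, ← hc, ← hd] at e01 e10
  rw [← hb, ← hd] at e11
  clear ha hb hc hd
  obtain ⟨D, hD⟩ : ∃ D, D = a * d - b * c := ⟨_, rfl⟩
  have hd : d = D * (starRingEnd ℂ) a := by
    rw [hD]; linear_combination (-d) * e00 + c * e01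
  have hb : b = -(D * (starRingEnd ℂ) c) := by
    rw [hD]; linear_combination (-b) * e00 + a * e01
  have hDD : D * (starRingEnd ℂ) D = 1 := by
    have e := e11
    rw [hd, hb] at e
    simp only [map_neg, map_mul, Complex.conj_conj] at e
    linear_combination e - D * (starRingEnd ℂ) D * e00
  have nD : ‖D‖ = 1 := by
    rw [Complex.mul_conj, Complex.normSq_eq_norm_sq] at hDD
    have : ‖D‖ ^ 2 = 1 := by exact_mod_cast hDD
    nlinarith [norm_nonneg D]
  have nac : ‖a‖ ^ 2 + ‖c‖ ^ 2 = 1 := by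
    rw [mul_comm, Complex.mul_conj, mul_comm, Complex.mul_conj, Complex.normSq_eq_norm_sq,
      Complex.normSq_eq_norm_sq] at e00
    exact_mod_cast e00
  have pa := Complex.norm_mul_exp_arg_mul_I a
  have pc := Complex.norm_mul_exp_arg_mul_I c
  have pD := Complex.norm_mul_exp_arg_mul_I D
  rw [nD, Complex.ofReal_one, one_mul] at pD
  have conjpol : ∀ z : ℂ, (starRingEnd ℂ) z = ‖z‖ * Complex.exp (-(z.arg * Complex.I)) := by
    intro z
    conv_lhs => rw [← Complex.norm_mul_exp_arg_mul_I z]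
    rw [map_mul, Complex.conj_ofReal, ← Complex.exp_conj, map_mul, Complex.conj_ofReal,
      Complex.conj_I, mul_neg]
  have hcos : Real.cos ((2 * Real.arccos ‖a‖) / 2) = ‖a‖ := by
    rw [mul_div_cancel_left₀ _ two_ne_zero]
    exact Real.cos_arccos (by linarith [norm_nonneg a]) (by nlinarith [norm_nonneg a, sq_nonneg ‖c‖])
  have hsin : Real.sin ((2 * Real.arccos ‖a‖) / 2) = ‖c‖ := by
    rw [mul_div_cancel_left₀ _ two_ne_zero, Real.sin_arccos,
      show 1 - ‖a‖ ^ 2 = ‖c‖ ^ 2 by linarith, Real.sqrt_sq (norm_nonneg c)]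
  have key : ∀ α β γ δ : ℝ, Complex.exp ((α : ℂ) * Complex.I) • (Rz β * Ry γ * Rz δ) =
      !![Complex.exp (((α - β/2 - δ/2 : ℝ) : ℂ) * Complex.I) * (Real.cos (γ/2) : ℂ),
             -(Complex.exp (((α - β/2 + δ/2 : ℝ) : ℂ) * Complex.I) * (Real.sin (γ/2) : ℂ));
             Complex.exp (((α + β/2 - δ/2 : ℝ) : ℂ) * Complex.I) * (Real.sin (γ/2) : ℂ),
             Complex.exp (((α + β/2 + δ/2 : ℝ) : ℂ) * Complex.I) * (Real.cos (γ/2) : ℂ)] := by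
    intro α β γ δ
    obtain ⟨C, hC⟩ : ∃ C : ℂ, C = (Real.cos (γ/2) : ℂ) := ⟨_, rfl⟩
    obtain ⟨S, hS⟩ : ∃ S : ℂ, S = (Real.sin (γ/2) : ℂ) := ⟨_, rfl⟩
    unfold Rz Ry
    rw [← hC, ← hS]
    have x1 : (((α - β/2 - δ/2 : ℝ) : ℂ) * Complex.I) =
      α * Complex.I + -((β : ℂ)/2) * Complex.I + -((δ : ℂ)/2) * Complex.I := by push_cast; ring
    have x2 : (((α - β/2 + δ/2 : ℝ) : ℂ) * Complex.I) =
      α * Complex.I + -((β : ℂ)/2) * Complex.I + ((δ : ℂ)/2) * Complex.I := by push_cast; ring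
    have x3 : (((α + β/2 - δ/2 : ℝ) : ℂ) * Complex.I) =
      α * Complex.I + ((β : ℂ)/2) * Complex.I + -((δ : ℂ)/2) * Complex.I := by push_cast; ring
    have x4 : (((α + β/2 + δ/2 : ℝ) : ℂ) * Complex.I) =
      α * Complex.I + ((β : ℂ)/2) * Complex.I + ((δ : ℂ)/2) * Complex.I := by push_cast; ring
    rw [x1, x2, x3, x4]
    simp only [Complex.exp_add]
    generalize Complex.exp (-((β : ℂ)/2) * Complex.I) = u1
    generalize Complex.exp (((β : ℂ)/2) * Complex.I) = u2
    generalize Complex.exp (-((δ : ℂ)/2) * Complex.I) = u3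
    generalize Complex.exp (((δ : ℂ)/2) * Complex.I) = u4
    ext i j
    fin_cases i <;> fin_cases j <;> simp [Matrix.mul_apply, Fin.sum_univ_two] <;> ring
  refine ⟨D.arg / 2, c.arg - a.arg, 2 * Real.arccos ‖a‖, D.arg - a.arg - c.arg, ?_⟩
  rw [key, and_self, hcos, hsin, hUe]
  have y1 : D.arg / 2 - (c.arg - a.arg) / 2 - (D.arg - a.arg - c.arg) / 2 = a.arg := by ring
  have y2 : D.arg / 2 - (c.arg - a.arg) / 2 + (D.arg - a.arg - c.arg) / 2 = D.arg - c.arg := by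
    ring
  have y3 : D.arg / 2 + (c.arg - a.arg) / 2 - (D.arg - a.arg - c.arg) / 2 = c.arg := by ring
  have y4 : D.arg / 2 + (c.arg - a.arg) / 2 + (D.arg - a.arg - c.arg) / 2 = D.arg - a.arg := by
    ring
  rw [y1, y2, y3, y4]
  have z1 : a = Complex.exp (a.arg * Complex.I) * ‖a‖ := by rw [mul_comm, pa]
  have z3 : c = Complex.exp (c.arg * Complex.I) * ‖c‖ := by rw [mul_comm, pc]
  have z2 : b = -(Complex.exp (((D.arg - c.arg : ℝ) : ℂ) * Complex.I) * ‖c‖) := by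
    rw [hb, conjpol c, Complex.ofReal_sub, sub_mul, sub_eq_add_neg, Complex.exp_add, pD]; ring
  have z4 : d = Complex.exp (((D.arg - a.arg : ℝ) : ℂ) * Complex.I) * ‖a‖ := by
    rw [hd, conjpol a, Complex.ofReal_sub, sub_mul, sub_eq_add_neg, Complex.exp_add, pD]; ring
  rw [← z1, ← z2, ← z3, ← z4]

end
end

section
/- For every unitary 2×2 complex matrix U there exist real numbers α, β, γ, δ such that, setting A := Rz(β)·Ry(γ/2), B := Ry(−γ/2)·Rz(−(δ+β)/2), and C := Rz((δ−β)/2), one has A·B·C = I and U = e^{iα}·A·X·B·X·C. -/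
open Matrix Complex

noncomputable section

/-- Pauli X -/
def X : Matrix (Fin 2) (Fin 2) ℂ := !![0, 1; 1, 0]

lemma Rz_add (a b : ℝ) : Rz a * Rz b = Rz (a + b) := by
  unfold Rz
  ext i j
  fin_cases i <;> fin_cases j <;> simp [Matrix.mul_apply, Fin.sum_univ_two, ← Complex.exp_add] <;>
    ring_nf

lemma Rz_zero : Rz 0 = 1 := by
  unfold Rz
  ext i j
  fin_cases i <;> fin_cases j <;> simp

lemma Ry_add (a b : ℝ) : Ry a * Ry b = Ry (a + b) := by
  unfold Ry
  rw [add_div, Real.cos_add, Real.sin_add]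
  ext i j
  fin_cases i <;> fin_cases j <;> simp [Matrix.mul_apply, Fin.sum_univ_two] <;>
    ring

lemma Ry_zero : Ry 0 = 1 := by
  unfold Ry
  ext i j
  fin_cases i <;> fin_cases j <;> simp

lemma X_Ry_Rz_X (a b : ℝ) : X * (Ry a * Rz b) * X = Ry (-a) * Rz (-b) := by
  unfold X Ry Rz
  ext i j
  fin_cases i <;> fin_cases j <;>
    simp [Matrix.mul_apply, Fin.sum_univ_two, neg_div, Real.cos_neg, Real.sin_neg]

lemma first_part (β γ δ : ℝ) :
    Rz β * Ry (γ/2) * (Ry (-γ/2) * Rz (-(δ+β)/2)) * Rz ((δ-β)/2) = 1 := by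
  have h1 : Ry (γ/2) * Ry (-γ/2) = 1 := by
    rw [Ry_add, ← Ry_zero]; congr 1; ring
  calc _ = Rz β * (Ry (γ/2) * Ry (-γ/2)) * (Rz (-(δ+β)/2) * Rz ((δ-β)/2)) := by
        simp only [Matrix.mul_assoc]
    _ = 1 := by
        rw [h1, Matrix.mul_one, Rz_add, Rz_add, ← Rz_zero]; congr 1; ring

lemma second_part (β γ δ : ℝ) :
    Rz β * Ry (γ/2) * X * (Ry (-γ/2) * Rz (-(δ+β)/2)) * X * Rz ((δ-β)/2)
      = Rz β * Ry γ * Rz δ := by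
  calc _ = Rz β * Ry (γ/2) * (X * (Ry (-γ/2) * Rz (-(δ+β)/2)) * X) * Rz ((δ-β)/2) := by
        simp only [Matrix.mul_assoc]
    _ = Rz β * (Ry (γ/2) * Ry (-(-γ/2))) * (Rz (-(-(δ+β)/2)) * Rz ((δ-β)/2)) := by
        rw [X_Ry_Rz_X]; simp only [Matrix.mul_assoc]
    _ = _ := by
        rw [Ry_add, Rz_add]; congr 3 <;> ring

lemma zyz (U : Matrix (Fin 2) (Fin 2) ℂ) (hU : IsUnitary U) :
    ∃ α β γ δ : ℝ, U = Complex.exp ((α : ℂ) * Complex.I) • (Rz β * Ry γ * Rz δ) := by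
  obtain ⟨h1, h2⟩ := hU
  have hD : ‖U.det‖ = 1 := by
    have h := congrArg Matrix.det h1
    rw [Matrix.det_mul, Matrix.det_conjTranspose, Matrix.det_one] at h
    have h' := congrArg norm h
    simp only [norm_mul, norm_star, norm_one] at h'
    nlinarith [norm_nonneg U.det]
  -- the adjugate is det times the conjugate transpose
  have hadj : U.adjugate = U.det • Uᴴ := by
    calc U.adjugate = U.adjugate * (U * Uᴴ) := by rw [h1, Matrix.mul_one]
      _ = _ := by rw [← Matrix.mul_assoc, Matrix.adjugate_mul, Matrix.smul_mul, Matrix.one_mul]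
  have hd : U 1 1 = U.det * star (U 0 0) := by
    have := congrFun (congrFun hadj 0) 0
    simpa [Matrix.adjugate_fin_two] using this
  have hb : U 0 1 = - (U.det * star (U 1 0)) := by
    have := congrFun (congrFun hadj 0) 1
    rw [← neg_eq_iff_eq_neg]
    simpa [Matrix.adjugate_fin_two] using this
  have hn : ‖U 0 0‖ ^ 2 + ‖U 1 0‖ ^ 2 = 1 := by
    have := congrFun (congrFun h2 0) 0
    simp only [Matrix.mul_apply, Fin.sum_univ_two, Matrix.conjTranspose_apply, Matrix.one_apply_eq,
      Complex.star_def, Complex.conj_mul'] at this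
    exact_mod_cast this
  have hc : Real.cos (Real.arccos ‖U 0 0‖) = ‖U 0 0‖ :=
    Real.cos_arccos (by linarith [norm_nonneg (U 0 0)]) (by nlinarith [sq_nonneg ‖U 1 0‖])
  have hs : Real.sin (Real.arccos ‖U 0 0‖) = ‖U 1 0‖ := by
    rw [Real.sin_arccos, ← Real.sqrt_sq (norm_nonneg (U 1 0))]; congr 1; linarith
  have ea := Complex.norm_mul_exp_arg_mul_I (U 0 0)
  have ec := Complex.norm_mul_exp_arg_mul_I (U 1 0)
  have eD := Complex.norm_mul_exp_arg_mul_I U.det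
  rw [hD, Complex.ofReal_one, one_mul] at eD
  have sa : star (U 0 0) = ‖U 0 0‖ * Complex.exp (-((U 0 0).arg * Complex.I)) := by
    conv_lhs => rw [← ea]
    simp only [Complex.star_def, map_mul, Complex.conj_ofReal, ← Complex.exp_conj, Complex.conj_I,
      mul_neg]
  have sc : star (U 1 0) = ‖U 1 0‖ * Complex.exp (-((U 1 0).arg * Complex.I)) := by
    conv_lhs => rw [← ec]
    simp only [Complex.star_def, map_mul, Complex.conj_ofReal, ← Complex.exp_conj, Complex.conj_I,
      mul_neg]
  rw [sa, ← eD] at hd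
  rw [sc, ← eD] at hb
  generalize U.det.arg = t at *
  generalize (U 0 0).arg = p at *
  generalize (U 1 0).arg = q at *
  refine ⟨t / 2, q - p, 2 * Real.arccos ‖U 0 0‖, t - p - q, ?_⟩
  have key : ∀ x y z w r : ℂ, x + y + z = w →
      Complex.exp x * (Complex.exp y * r * Complex.exp z) = r * Complex.exp w := by
    intro x y z w r h
    rw [← h, Complex.exp_add, Complex.exp_add]; ring
  unfold Rz Ry
  rw [mul_div_cancel_left₀ _ (two_ne_zero), hc, hs]
  ext i j
  fin_cases i <;> fin_cases j <;>
    simp only [Matrix.smul_apply, Matrix.mul_apply, Fin.sum_univ_two, smul_eq_mul, Fin.zero_eta,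
      Fin.mk_one, Matrix.of_apply, Matrix.cons_val', Matrix.cons_val_zero, Matrix.cons_val_one,
      Matrix.cons_val_fin_one, mul_zero, zero_mul, add_zero, zero_add]
  · rw [key _ _ _ (p * Complex.I) _ (by push_cast; ring), ea]
  · rw [key _ _ _ (t * Complex.I + -(q * Complex.I)) _ (by push_cast; ring), hb, Complex.exp_add]
    ring
  · rw [key _ _ _ (q * Complex.I) _ (by push_cast; ring), ec]
  · rw [key _ _ _ (t * Complex.I + -(p * Complex.I)) _ (by push_cast; ring), hd, Complex.exp_add]
    ring

theorem axbxc_decomposition (U : Matrix (Fin 2) (Fin 2) ℂ) (hU : IsUnitary U) :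
    ∃ α β γ δ : ℝ,
      Rz β * Ry (γ/2) * (Ry (-γ/2) * Rz (-(δ+β)/2)) * Rz ((δ-β)/2) = 1 ∧
      U = Complex.exp ((α : ℂ) * Complex.I) •
        (Rz β * Ry (γ/2) * X * (Ry (-γ/2) * Rz (-(δ+β)/2)) * X * Rz ((δ-β)/2)) := by
  obtain ⟨α, β, γ, δ, h⟩ := zyz U hU
  exact ⟨α, β, γ, δ, first_part β γ δ, by rw [second_part]; exact h⟩

end
end

section
/- Let U be a unitary 2×2 complex matrix. There exist a real number α and a unitary 2×2 matrix A such that U·X = e^{iα}·(A·X·Aᴴ) if and only if there exist real numbers α', β, γ such that U = e^{iα'}·Rz(β)·Ry(γ)·Rz(β). (Equivalently: the controlled-(UX) gate can be realized with a single CNOT gate and two single-qubit gates that are conjugate transposes of each other, up to a phase on the control, precisely for such U.) -/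
open Matrix Complex

noncomputable section

theorem conj_two' : (starRingEnd ℂ) 2 = 2 := map_ofNat _ 2

theorem Rz_unitary (β : ℝ) : Rz β * (Rz β)ᴴ = 1 := by
  ext i j
  fin_cases i <;> fin_cases j <;>
    simp [Rz, Matrix.mul_apply, Fin.sum_univ_two, conj_two', ← Complex.exp_conj, ← Complex.exp_add]

theorem Ry_unitary (β : ℝ) : Ry β * (Ry β)ᴴ = 1 := by
  have h := Complex.sin_sq_add_cos_sq ((β : ℂ) / 2)
  ext i j
  fin_cases i <;> fin_cases j <;>
    simp [Ry, Matrix.mul_apply, Fin.sum_univ_two, conj_two', ← Complex.cos_conj, ← Complex.sin_conj] <;>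
    first | ring1 | linear_combination h

theorem Rz_X (β : ℝ) : Rz β * X = X * (Rz β)ᴴ := by
  ext i j
  fin_cases i <;> fin_cases j <;>
    simp [Rz, X, Matrix.mul_apply, Fin.sum_univ_two, conj_two', ← Complex.exp_conj]

theorem Ry_X (γ : ℝ) : Ry γ * X = Ry (γ / 2) * X * (Ry (γ / 2))ᴴ := by
  have h1 : Complex.sin ((γ : ℂ) / 2) = 2 * Complex.sin ((γ : ℂ) / 2 / 2) * Complex.cos ((γ : ℂ) / 2 / 2) := by
    rw [← Complex.sin_two_mul]; congr 1; ring
  have h2 : Complex.cos ((γ : ℂ) / 2) = Complex.cos ((γ : ℂ) / 2 / 2) ^ 2 - Complex.sin ((γ : ℂ) / 2 / 2) ^ 2 := by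
    rw [← Complex.cos_two_mul']; congr 1; ring
  ext i j
  fin_cases i <;> fin_cases j <;>
    simp [Ry, X, Matrix.mul_apply, Fin.sum_univ_two, conj_two', ← Complex.cos_conj, ← Complex.sin_conj, h1, h2] <;>
    ring

theorem X_mul_X : X * X = 1 := by
  ext i j
  fin_cases i <;> fin_cases j <;> simp [X, Matrix.mul_apply, Fin.sum_univ_two]

theorem X_herm : Xᴴ = X := by
  ext i j
  fin_cases i <;> fin_cases j <;> simp [X]

theorem X_trace : X.trace = 0 := by
  simp [X, Matrix.trace, Fin.sum_univ_two]

theorem herm_form (M : Matrix (Fin 2) (Fin 2) ℂ) (hH : Mᴴ = M) (hT : M.trace = 0)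
    (hS : M * M = 1) : ∃ β γ : ℝ, M * X = Rz β * Ry γ * Rz β := by
  obtain ⟨r, hr⟩ : ∃ r : ℝ, M 0 0 = r := by
    have h := congrFun (congrFun hH 0) 0
    exact ⟨_, (Complex.conj_eq_iff_re.1 h).symm⟩
  have h01 : M 0 1 = (starRingEnd ℂ) (M 1 0) := (congrFun (congrFun hH 0) 1).symm
  have h11 : M 1 1 = -r := by
    have h : M 0 0 + M 1 1 = 0 := by simpa [Matrix.trace, Fin.sum_univ_two] using hT
    rw [hr] at h
    linear_combination h
  have hn : ‖M 1 0‖ ^ 2 = 1 - r ^ 2 := by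
    have h := congrFun (congrFun hS 0) 0
    simp only [Matrix.mul_apply, Fin.sum_univ_two, hr, h01, Matrix.one_apply_eq] at h
    rw [Complex.conj_mul'] at h
    have h' : r * r + ‖M 1 0‖ ^ 2 = 1 := by exact_mod_cast h
    linarith
  have hpos := norm_nonneg (M 1 0)
  have hs : Real.sin (Real.arcsin (-r)) = -r :=
    Real.sin_arcsin (by nlinarith) (by nlinarith)
  have hc : Real.cos (Real.arcsin (-r)) = ‖M 1 0‖ := by
    rw [Real.cos_arcsin, neg_sq, ← hn, Real.sqrt_sq hpos]
  have hz : (‖M 1 0‖ : ℂ) * Complex.exp (Complex.arg (M 1 0) * Complex.I) = M 1 0 :=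
    Complex.norm_mul_exp_arg_mul_I _
  have hz' : (‖M 1 0‖ : ℂ) * Complex.exp (-(Complex.arg (M 1 0) * Complex.I))
      = (starRingEnd ℂ) (M 1 0) := by
    have h := congrArg (starRingEnd ℂ) hz
    rwa [map_mul, ← Complex.exp_conj, map_mul, Complex.conj_ofReal, Complex.conj_ofReal,
      Complex.conj_I, mul_neg] at h
  have e1 : Complex.exp (Complex.arg (M 1 0) * Complex.I)
      = Complex.exp (((Complex.arg (M 1 0) : ℂ)/2) * Complex.I)
        * Complex.exp (((Complex.arg (M 1 0) : ℂ)/2) * Complex.I) := by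
    rw [← Complex.exp_add]; congr 1; ring
  have e2 : Complex.exp (-(Complex.arg (M 1 0) * Complex.I))
      = Complex.exp (-((Complex.arg (M 1 0) : ℂ)/2) * Complex.I)
        * Complex.exp (-((Complex.arg (M 1 0) : ℂ)/2) * Complex.I) := by
    rw [← Complex.exp_add]; congr 1; ring
  have e3 : Complex.exp (-((Complex.arg (M 1 0) : ℂ)/2) * Complex.I)
        * Complex.exp (((Complex.arg (M 1 0) : ℂ)/2) * Complex.I) = 1 := by
    rw [← Complex.exp_add, ← Complex.exp_zero]; congr 1; ring
  rw [e1] at hz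
  rw [e2] at hz'
  refine ⟨Complex.arg (M 1 0), 2 * Real.arcsin (-r), ?_⟩
  have hh : 2 * Real.arcsin (-r) / 2 = Real.arcsin (-r) := by ring
  have hMX : M * X = !![(r : ℂ), (starRingEnd ℂ) (M 1 0); M 1 0, -r] * X := by
    conv_lhs => rw [Matrix.eta_fin_two M, hr, h01, h11]
  rw [hMX, Rz, Ry, hh, hs, hc, X]
  simp only [Matrix.mul_fin_two]
  clear e1 e2
  generalize Complex.exp (((Complex.arg (M 1 0) : ℂ)/2) * Complex.I) = p at *
  generalize Complex.exp (-((Complex.arg (M 1 0) : ℂ)/2) * Complex.I) = q at *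
  push_cast
  ext i j
  fin_cases i <;> fin_cases j <;> simp
  · linear_combination -hz'
  · linear_combination -(r : ℂ) * e3
  · linear_combination -(r : ℂ) * e3
  · linear_combination -hz

theorem controlled_UX_single_CNOT_iff (U : Matrix (Fin 2) (Fin 2) ℂ) (hU : IsUnitary U) :
    (∃ (α : ℝ) (A : Matrix (Fin 2) (Fin 2) ℂ), IsUnitary A ∧
        U * X = Complex.exp ((α : ℂ) * Complex.I) • (A * X * Aᴴ)) ↔
    (∃ α' β γ : ℝ, U = Complex.exp ((α' : ℂ) * Complex.I) • (Rz β * Ry γ * Rz β)) := by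
  constructor
  · rintro ⟨α, A, ⟨hA1, hA2⟩, h⟩
    obtain ⟨β, γ, hM⟩ := herm_form (A * X * Aᴴ)
      (by simp [Matrix.conjTranspose_mul, X_herm, Matrix.mul_assoc])
      (by rw [Matrix.trace_mul_comm, ← Matrix.mul_assoc, hA2, Matrix.one_mul, X_trace])
      (by
        calc A * X * Aᴴ * (A * X * Aᴴ) = A * X * (Aᴴ * A) * X * Aᴴ := by
              simp only [Matrix.mul_assoc]
          _ = A * (X * X) * Aᴴ := by rw [hA2]; simp only [Matrix.mul_assoc, Matrix.one_mul]
          _ = 1 := by rw [X_mul_X, Matrix.mul_one, hA1])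
    refine ⟨α, β, γ, ?_⟩
    rw [← hM, ← Matrix.smul_mul, ← h, Matrix.mul_assoc, X_mul_X, Matrix.mul_one]
  · rintro ⟨α, β, γ, rfl⟩
    have hA : Rz β * Ry (γ / 2) * (Rz β * Ry (γ / 2))ᴴ = 1 := by
      rw [Matrix.conjTranspose_mul, Matrix.mul_assoc, ← Matrix.mul_assoc (Ry _), Ry_unitary,
        Matrix.one_mul, Rz_unitary]
    refine ⟨α, Rz β * Ry (γ / 2), ⟨hA, mul_eq_one_comm.1 hA⟩, ?_⟩
    rw [Matrix.smul_mul, Matrix.mul_assoc _ (Rz β) X, Rz_X, ← Matrix.mul_assoc,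
      Matrix.mul_assoc (Rz β), Ry_X, Matrix.conjTranspose_mul]
    simp only [Matrix.mul_assoc]

end
end

section
/- Let k ≥ 1 be a natural number and R_k := diag(1, e^{2πi/2^k}). If there exist unitary 2×2 complex matrices U₁, U₂ and a real number φ such that U₁·U₂ = I and U₁·X·U₂ = e^{iφ}·R_k, then k = 1. (That is, an ancilla-free controlled-R_k cannot be implemented with only one CNOT gate, single-qubit gates on the target, and a phase gate on the control, unless R_k = Z.) -/
open Matrix Complex

noncomputable section

/-- R_k := diag(1, e^{2πi/2^k}). -/
def Rk (k : ℕ) : Matrix (Fin 2) (Fin 2) ℂ :=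
  !![1, 0; 0, Complex.exp (2 * (Real.pi : ℂ) * Complex.I / (2 ^ k : ℂ))]

theorem no_single_CNOT_controlled_Rk (k : ℕ) (hk : 1 ≤ k)
    (h : ∃ (U₁ U₂ : Matrix (Fin 2) (Fin 2) ℂ) (φ : ℝ),
      IsUnitary U₁ ∧ IsUnitary U₂ ∧ U₁ * U₂ = 1 ∧
      U₁ * X * U₂ = Complex.exp ((φ : ℂ) * Complex.I) • Rk k) :
    k = 1 := by
  obtain ⟨U₁, U₂, φ, -, -, h1, h2⟩ := h
  have h21 : U₂ * U₁ = 1 := mul_eq_one_comm.mp h1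
  have ht := congrArg Matrix.trace h2
  rw [Matrix.trace_mul_comm, ← Matrix.mul_assoc, h21, Matrix.one_mul, Matrix.trace_smul] at ht
  simp only [X, Rk, Matrix.trace_fin_two_of, smul_eq_mul, add_zero] at ht
  have hw := (mul_eq_zero.mp ht.symm).resolve_left (Complex.exp_ne_zero _)
  have hw2 : Complex.exp (2 * (Real.pi : ℂ) * Complex.I / (2 ^ k : ℂ))
      = Complex.exp ((Real.pi : ℂ) * Complex.I) := by
    rw [Complex.exp_pi_mul_I]
    linear_combination hw
  obtain ⟨n, hn⟩ := Complex.exp_eq_exp_iff_exists_int.mp hw2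
  obtain ⟨m, rfl⟩ : ∃ m, k = m + 1 := ⟨k - 1, by omega⟩
  have hpi : (Real.pi : ℂ) * Complex.I ≠ 0 :=
    mul_ne_zero (by exact_mod_cast Real.pi_ne_zero) Complex.I_ne_zero
  have hp : (2 : ℂ) ^ (m + 1) ≠ 0 := pow_ne_zero _ two_ne_zero
  rw [div_eq_iff hp] at hn
  have h3 : (1 : ℂ) = (2 : ℂ) ^ m * (1 + 2 * n) := by
    apply mul_left_cancel₀ (mul_ne_zero hpi (two_ne_zero : (2 : ℂ) ≠ 0))
    rw [pow_succ] at hn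
    linear_combination hn
  have h4 : (1 : ℤ) = (2 : ℤ) ^ m * (1 + 2 * n) := by exact_mod_cast h3
  rcases m with _ | m
  · rfl
  · rw [pow_succ] at h4
    have h5 : (1 : ℤ) = 2 * (2 ^ m * (1 + 2 * n)) := by linear_combination h4
    omega

end
end

section
/- Let θ be a real number, M := diag(1, e^{2iθ}) and P := diag(1, e^{-iθ}). Then in ℂ²⊗ℂ², ((H·P) ⊗ I₂)·C(M·X)·((1/√2)(e₀+e₁) ⊗ e₀) = (1/√2)·(e₀ ⊗ v₊ + e₁ ⊗ v₋), where v₊ := (1/√2)(e₀ + e^{iθ}e₁) and v₋ := (1/√2)(e₀ − e^{iθ}e₁). (This is the correctness of the fault-tolerant measurement circuit preparing the ancilla state: outcome 0 of the first qubit leaves the second qubit in v₊ and outcome 1 leaves it in v₋.) -/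
open Matrix Complex Kronecker

noncomputable section

/-- The Hadamard gate. -/
def H : Matrix (Fin 2) (Fin 2) ℂ := ((Real.sqrt 2 : ℂ))⁻¹ • !![1, 1; 1, -1]

/-- The controlled-U gate: block-diagonal diag(I₂, U) on ℂ²⊗ℂ²
(first factor = control, basis ordering |00⟩,|01⟩,|10⟩,|11⟩). -/
def ctrl (U : Matrix (Fin 2) (Fin 2) ℂ) : Matrix (Fin 2 × Fin 2) (Fin 2 × Fin 2) ℂ :=
  Matrix.of fun p q =>
    if p.1 = 0 ∧ q.1 = 0 then (1 : Matrix (Fin 2) (Fin 2) ℂ) p.2 q.2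
    else if p.1 = 1 ∧ q.1 = 1 then U p.2 q.2
    else 0

/-- Tensor (Kronecker) product of two vectors in ℂ². -/
def tp (v w : Fin 2 → ℂ) : Fin 2 × Fin 2 → ℂ := fun p => v p.1 * w p.2

theorem fault_tolerant_measurement_circuit_correctness (θ : ℝ) :
    let M : Matrix (Fin 2) (Fin 2) ℂ := !![1, 0; 0, Complex.exp (2 * (θ : ℂ) * Complex.I)]
    let P : Matrix (Fin 2) (Fin 2) ℂ := !![1, 0; 0, Complex.exp (-(θ : ℂ) * Complex.I)]
    let vplus : Fin 2 → ℂ :=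
      ![(1 : ℂ) / (Real.sqrt 2 : ℂ), Complex.exp ((θ : ℂ) * Complex.I) / (Real.sqrt 2 : ℂ)]
    let vminus : Fin 2 → ℂ :=
      ![(1 : ℂ) / (Real.sqrt 2 : ℂ), -(Complex.exp ((θ : ℂ) * Complex.I) / (Real.sqrt 2 : ℂ))]
    (((H * P) ⊗ₖ (1 : Matrix (Fin 2) (Fin 2) ℂ)) * ctrl (M * X)).mulVec
        (tp ![(1 : ℂ) / (Real.sqrt 2 : ℂ), (1 : ℂ) / (Real.sqrt 2 : ℂ)] ![1, 0]) =
      ((Real.sqrt 2 : ℂ))⁻¹ • (tp ![1, 0] vplus + tp ![0, 1] vminus) := by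
  intro M P vplus vminus
  have h : Complex.exp (-((θ : ℂ) * Complex.I)) * Complex.exp (2 * (θ : ℂ) * Complex.I)
      = Complex.exp ((θ : ℂ) * Complex.I) := by
    rw [← Complex.exp_add]; congr 1; ring
  funext ⟨i, j⟩
  fin_cases i <;> fin_cases j <;>
    simp [M, P, vplus, vminus, H, X, ctrl, tp, Matrix.mulVec, dotProduct, Matrix.mul_apply,
      Fintype.sum_prod_type, Fin.sum_univ_two, Matrix.one_apply, ← h] <;> ring

end
end
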